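/- Let d > 2 be an integer and C₀ > 0. There exist constants C > 0 and α₀ ∈ (0,1), depending only on d and C₀, such that for all α ∈ (0, α₀) and all x ∈ ℤ^d with 0 < ‖x‖ ≤ C₀/√α: g(x) − g_α(x) ≤ C·(‖x‖·√α)^{2d(d−2)/(d²+2d−4)}·g(x). -/

import Mathlib

/-!
Write `r = ‖x‖`, `γ = d(d-2)/(d²+2d-4)` (half of the exponent in the theorem) and `p_k(x)` for
`srwP d k x`. Here `0 < γ ≤ 1` and `γ < (d-2)/2`. Bernoulli's inequality gives
`1 - (1-α)^k ≤ (αk)^γ`, hence `g(x) - g_α(x) ≤ ∑ (αk)^γ p_k(x)`.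

* Times `k ≤ r²` contribute at most `(α r²)^γ g(x)`, because `∑ p_k(x) = g(x)`.
* Times `k > r²` are controlled by the on-diagonal bound `p_k(x) ≤ A k^{-d/2}` (`srwP_toReal_le`).
  As `d/2 - γ > 1`, they contribute at most a multiple of `(α r²)^γ r^{2-d}`
  (`tail_weighted_le`), and `r^{2-d}` is at most a multiple of `g(x)` (`green_lower`).

The on-diagonal bound follows from Fourier inversion (`srwP_fourier`) and
`|d⁻¹ ∑ cos θ_i| ≤ exp (-(2d)⁻¹ ∑ sin² θ_i)`, which reduces the integral over the cube to a power
of a one-dimensional Gaussian-type integral.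

The lower bound on `g` is a maximum principle: the function `(‖x‖² - 2d)^{-(d-2)/2}` is strictly
subharmonic for large `‖x‖` (`barrier_strict_subharmonic`) and vanishes at infinity, while `g` is
positive everywhere and harmonic off the origin.
-/

open Filter

noncomputable section

/-- `srwP d k x` is the probability that the simple random walk on `ℤ^d`
started at `0` is at `x` at time `k`. -/
def srwP (d : ℕ) : ℕ → (Fin d → ℤ) → ENNReal
  | 0, x => if x = 0 then 1 else 0
  | k + 1, x =>
      (2 * d : ENNReal)⁻¹ *
        ∑ i : Fin d, (srwP d k (x - Pi.single i 1) + srwP d k (x + Pi.single i 1))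

/-- The Euclidean norm on `ℤ^d`. -/
def nrmZ (d : ℕ) (x : Fin d → ℤ) : ℝ := Real.sqrt (∑ i, ((x i : ℝ)) ^ 2)

/-- The Green's function of the simple random walk on `ℤ^d`. -/
def green (d : ℕ) (x : Fin d → ℤ) : ENNReal := ∑' k : ℕ, srwP d k x

/-- Convolution of two `[0,∞]`-valued functions on `ℤ^d`. -/
def convE (d : ℕ) (f h : (Fin d → ℤ) → ENNReal) (z : Fin d → ℤ) : ENNReal :=
  ∑' x, f x * h (z - x)


/-- The Green's function `g_α(x) = Σ_k (1−α)^k P(X_k = x)` of the killed walk. -/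
def greenK (d : ℕ) (α : ℝ) (x : Fin d → ℤ) : ENNReal :=
  ∑' k : ℕ, ENNReal.ofReal ((1 - α) ^ k) * srwP d k x

/-! ### Real inequalities -/

/-- Second-order lower bound for the even function `(1 + y)^{-p} + (1 - y)^{-p}`; it holds with no
error term because the second derivative is smallest at `y = 0`. -/
lemma rpow_neg_sym_ge {p y : ℝ} (hp : 0 < p) (hy0 : 0 ≤ y) (hy1 : y < 1) :
    2 + p * (p + 1) * y ^ 2 ≤ (1 + y) ^ (-p) + (1 - y) ^ (-p) := by
  have hd : ∀ (q t : ℝ), t ∈ Set.Ico (0 : ℝ) 1 →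
      HasDerivAt (fun t : ℝ => (1 + t) ^ q) (q * (1 + t) ^ (q - 1)) t ∧
      HasDerivAt (fun t : ℝ => (1 - t) ^ q) (-(q * (1 - t) ^ (q - 1))) t := by
    intro q t ht
    constructor
    · have h := ((hasDerivAt_id t).const_add 1).rpow_const (p := q)
        (Or.inl (by simp only [id]; linarith [ht.1]))
      refine h.congr_deriv ?_
      simp
    · have h := ((hasDerivAt_id t).const_sub 1).rpow_const (p := q)
        (Or.inl (by simp only [id]; linarith [ht.2]))
      refine h.congr_deriv ?_
      simp
  have hI : interior (Set.Ico (0 : ℝ) 1) ⊆ Set.Ico (0 : ℝ) 1 := interior_subset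
  have key : ∀ t ∈ Set.Ico (0 : ℝ) 1,
      2 ≤ (1 + t) ^ (-p - 1 - 1) + (1 - t) ^ (-p - 1 - 1) := by
    intro t ht
    have h1 : 0 < 1 + t := by linarith [ht.1]
    have h2 : 0 < 1 - t := by linarith [ht.2]
    have h3 : ((1 + t) * (1 - t)) ^ (-p - 1 - 1) ≥ 1 :=
      Real.one_le_rpow_of_pos_of_le_one_of_nonpos (by positivity) (by nlinarith [sq_nonneg t]) (by linarith)
    rw [Real.mul_rpow h1.le h2.le] at h3
    nlinarith [Real.rpow_pos_of_pos h1 (-p - 1 - 1), Real.rpow_pos_of_pos h2 (-p - 1 - 1),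
      sq_nonneg ((1 + t) ^ (-p - 1 - 1) - (1 - t) ^ (-p - 1 - 1))]
  have hder1 : ∀ t ∈ Set.Ico (0 : ℝ) 1, HasDerivAt
      (fun t : ℝ => (1 - t) ^ (-p - 1) - (1 + t) ^ (-p - 1) - 2 * (p + 1) * t)
      ((p + 1) * ((1 + t) ^ (-p - 1 - 1) + (1 - t) ^ (-p - 1 - 1) - 2)) t := by
    intro t ht
    have h := ((hd (-p - 1) t ht).2.sub (hd (-p - 1) t ht).1).sub
      ((hasDerivAt_id t).const_mul (2 * (p + 1)))
    refine h.congr_deriv ?_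
    ring
  have hmono1 : MonotoneOn
      (fun t : ℝ => (1 - t) ^ (-p - 1) - (1 + t) ^ (-p - 1) - 2 * (p + 1) * t)
      (Set.Ico 0 1) := by
    refine monotoneOn_of_deriv_nonneg (convex_Ico 0 1)
      (fun t ht => (hder1 t ht).continuousAt.continuousWithinAt)
      (fun t ht => (hder1 t (hI ht)).differentiableAt.differentiableWithinAt) ?_
    intro t ht
    rw [(hder1 t (hI ht)).deriv]
    have := key t (hI ht)
    exact mul_nonneg (by linarith) (by linarith)
  have hder0 : ∀ t ∈ Set.Ico (0 : ℝ) 1, HasDerivAt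
      (fun t : ℝ => (1 + t) ^ (-p) + (1 - t) ^ (-p) - p * (p + 1) * t ^ 2)
      (p * ((1 - t) ^ (-p - 1) - (1 + t) ^ (-p - 1) - 2 * (p + 1) * t)) t := by
    intro t ht
    have h := ((hd (-p) t ht).1.add (hd (-p) t ht).2).sub
      ((hasDerivAt_pow 2 t).const_mul (p * (p + 1)))
    refine h.congr_deriv ?_
    push_cast
    ring
  have hmono0 : MonotoneOn
      (fun t : ℝ => (1 + t) ^ (-p) + (1 - t) ^ (-p) - p * (p + 1) * t ^ 2)
      (Set.Ico 0 1) := by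
    refine monotoneOn_of_deriv_nonneg (convex_Ico 0 1)
      (fun t ht => (hder0 t ht).continuousAt.continuousWithinAt)
      (fun t ht => (hder0 t (hI ht)).differentiableAt.differentiableWithinAt) ?_
    intro t ht
    rw [(hder0 t (hI ht)).deriv]
    have := hmono1 (Set.left_mem_Ico.2 one_pos) (hI ht) (hI ht).1
    simp at this
    exact mul_nonneg hp.le (by linarith)
  have := hmono0 (Set.left_mem_Ico.2 one_pos) ⟨hy0, hy1⟩ hy0
  norm_num at this
  linarith

lemma rpow_neg_sym_ge' {p u t : ℝ} (hp : 0 < p) (hu : 0 < u) (ht : |t| < u) :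
    u ^ (-p) * (2 + p * (p + 1) * t ^ 2 / u ^ 2) ≤ (u + t) ^ (-p) + (u - t) ^ (-p) := by
  have main : ∀ t : ℝ, 0 ≤ t → t < u →
      u ^ (-p) * (2 + p * (p + 1) * t ^ 2 / u ^ 2) ≤ (u + t) ^ (-p) + (u - t) ^ (-p) := by
    intro t ht0 ht
    have hlt : t / u < 1 := (div_lt_one hu).2 ht
    have h0 : 0 ≤ t / u := by positivity
    have h := rpow_neg_sym_ge hp h0 hlt
    have e1 : u + t = u * (1 + t / u) := by field_simp
    have e2 : u - t = u * (1 - t / u) := by field_simp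
    rw [e1, e2, Real.mul_rpow hu.le (by linarith), Real.mul_rpow hu.le (by linarith), ← mul_add]
    refine mul_le_mul_of_nonneg_left ?_ (Real.rpow_nonneg hu.le _)
    rw [div_pow] at h
    rwa [mul_div_assoc]
  rcases le_total 0 t with h | h
  · exact main t h (by rwa [abs_of_nonneg h] at ht)
  · have := main (-t) (by linarith) (by rwa [abs_of_nonpos h] at ht)
    rw [neg_sq, sub_neg_eq_add, ← sub_eq_add_neg] at this
    linarith

lemma one_sub_rpow_neg_lt {p z : ℝ} (hp : 0 < p) (hz : 0 < z) (hz2 : z ≤ 1 / 2)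
    (hpz : 2 * p * z ≤ 1) :
    (1 - z) ^ (-p) < 1 + p * z + p * (3 + 4 * p) * z ^ 2 := by
  have h1 : 0 < 1 - z := by linarith
  have hlog : -Real.log (1 - z) ≤ z + 2 * z ^ 2 := by
    have := Real.one_sub_inv_le_log_of_pos h1
    have h2 : (1 - z)⁻¹ ≤ 1 + z + 2 * z ^ 2 := by
      rw [inv_le_iff_one_le_mul₀ h1]
      nlinarith [sq_nonneg z, mul_pos hz hz]
    linarith
  set w := p * (z + 2 * z ^ 2) with hw
  have hw0 : 0 ≤ w := by positivity
  have hw1 : w ≤ 2 * p * z := by rw [hw]; nlinarith [mul_pos hp hz]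
  have hexp := Real.abs_exp_sub_one_sub_id_le (x := w) (by rw [abs_of_nonneg hw0]; linarith)
  have h3 := (abs_le.1 hexp).2
  have h4 : (1 - z) ^ (-p) ≤ Real.exp w := by
    rw [Real.rpow_def_of_pos h1]
    apply Real.exp_le_exp.2
    rw [hw]
    nlinarith
  have h5 : w ^ 2 ≤ (2 * p * z) ^ 2 := pow_le_pow_left₀ hw0 hw1 2
  nlinarith [mul_pos hp (mul_pos hz hz)]

/-- Tail of the `p`-series, by the telescoping bound
`(s - 1) (k + 1)^{-s} ≤ k^{1-s} - (k + 1)^{1-s}`. -/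
lemma rpow_sum_tail_le {s : ℝ} (hs : 1 < s) {N : ℕ} (hN : 1 ≤ N) (n : ℕ) :
    ∑ j ∈ Finset.range n, ((N + 1 + j : ℕ) : ℝ) ^ (-s) ≤
      ((N : ℝ) ^ (1 - s) - ((N + n : ℕ) : ℝ) ^ (1 - s)) / (s - 1) := by
  have hs1 : 0 < s - 1 := by linarith
  have step : ∀ k : ℕ, 1 ≤ k → (s - 1) * ((k + 1 : ℕ) : ℝ) ^ (-s) ≤
      (k : ℝ) ^ (1 - s) - ((k + 1 : ℕ) : ℝ) ^ (1 - s) := by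
    intro k hk
    have hk0 : (0 : ℝ) < k := by exact_mod_cast hk
    have hK : (0 : ℝ) < ((k + 1 : ℕ) : ℝ) := by positivity
    set K : ℝ := ((k + 1 : ℕ) : ℝ) with hKdef
    have hkK : (k : ℝ) = K * (k / K) := by field_simp
    have hr : 0 < (k : ℝ) / K := by positivity
    have hlog := Real.log_le_sub_one_of_pos hr
    have hkK' : (k : ℝ) / K - 1 = - (1 / K) := by
      rw [hKdef]; push_cast; field_simp; ring
    have hb : 1 + (s - 1) * (1 / K) ≤ ((k : ℝ) / K) ^ (1 - s) := by
      rw [Real.rpow_def_of_pos hr]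
      have := Real.add_one_le_exp (Real.log (k / K) * (1 - s))
      nlinarith
    have e1 : (k : ℝ) ^ (1 - s) = K ^ (1 - s) * ((k : ℝ) / K) ^ (1 - s) := by
      rw [← Real.mul_rpow hK.le hr.le, ← hkK]
    have e2 : K ^ (-s) = K ^ (1 - s) * (1 / K) := by
      rw [show -s = (1 - s) - 1 by ring, Real.rpow_sub_one hK.ne']
      ring
    rw [e1, e2]
    nlinarith [Real.rpow_pos_of_pos hK (1 - s)]
  induction n with
  | zero => simp
  | succ n ih =>
    rw [Finset.sum_range_succ]
    have := step (N + n) (by omega)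
    have e : N + 1 + n = N + n + 1 := by ring
    rw [e, show N + (n + 1) = N + n + 1 by ring]
    rw [le_div_iff₀ hs1] at ih ⊢
    linarith

lemma one_le_rpow_add_pow {α γ : ℝ} (hα : 0 < α) (hα1 : α < 1) (hγ : 0 < γ) (hγ1 : γ ≤ 1) (k : ℕ) :
    1 ≤ (α * k) ^ γ + (1 - α) ^ k := by
  have h0 : 0 ≤ α * k := by positivity
  have hp : 0 ≤ (1 - α) ^ k := pow_nonneg (by linarith) k
  rcases le_total (α * k) 1 with h | h
  · have h1 := one_add_mul_le_pow (a := -α) (by linarith) k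
    have h2 : α * k ≤ (α * k) ^ γ := Real.self_le_rpow_of_le_one h0 h hγ1
    rw [← sub_eq_add_neg] at h1
    linarith
  · have := Real.one_le_rpow h hγ.le
    linarith

/-! ### On-diagonal heat kernel bound by Fourier analysis -/

open MeasureTheory in
/-- Lebesgue measure on the period `(-π, π]`. -/
def periodMeasure : Measure ℝ := volume.restrict (Set.Ioc (-Real.pi) Real.pi)

instance : MeasureTheory.IsFiniteMeasure periodMeasure := by
  unfold periodMeasure; infer_instance

/-- Lebesgue measure on the cube `(-π, π]^d`. -/
def cubeMeasure (d : ℕ) : MeasureTheory.Measure (Fin d → ℝ) :=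
  MeasureTheory.Measure.pi fun _ => periodMeasure

instance (d : ℕ) : MeasureTheory.IsFiniteMeasure (cubeMeasure d) := by
  unfold cubeMeasure; infer_instance

/-- The characteristic function `d⁻¹ ∑ cos θ_i` of one step of the walk. -/
def stepChar (d : ℕ) (θ : Fin d → ℝ) : ℝ := (d : ℝ)⁻¹ * ∑ i, Real.cos (θ i)

/-- The character `θ ↦ e^{i x·θ}`, written as a product over coordinates. -/
def latticeChar (d : ℕ) (x : Fin d → ℤ) (θ : Fin d → ℝ) : ℂ :=
  ∏ j, Complex.exp (Complex.I * (x j : ℂ) * (θ j : ℂ))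

lemma integral_period_exp (n : ℤ) :
    ∫ t, Complex.exp (Complex.I * (n : ℂ) * (t : ℂ)) ∂periodMeasure =
      if n = 0 then 2 * (Real.pi : ℂ) else 0 := by
  unfold periodMeasure
  rw [← intervalIntegral.integral_of_le (by linarith [Real.pi_pos])]
  split_ifs with h
  · subst h
    simp
    ring
  · have hc : Complex.I * (n : ℂ) ≠ 0 := by simp [h]
    rw [integral_exp_mul_complex hc]
    have : Complex.exp (Complex.I * n * (Real.pi : ℝ)) =
        Complex.exp (Complex.I * n * ((-Real.pi : ℝ) : ℂ)) := by
      rw [Complex.exp_eq_exp_iff_exists_int]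
      exact ⟨n, by push_cast; ring⟩
    rw [this]; simp

lemma continuous_latticeChar (d : ℕ) (x : Fin d → ℤ) : Continuous (latticeChar d x) := by
  unfold latticeChar; fun_prop

lemma continuous_stepChar (d : ℕ) : Continuous (stepChar d) := by
  unfold stepChar; fun_prop

lemma norm_latticeChar (d : ℕ) (x : Fin d → ℤ) (θ : Fin d → ℝ) : ‖latticeChar d x θ‖ = 1 := by
  unfold latticeChar
  rw [norm_prod]
  refine Finset.prod_eq_one fun j _ => ?_
  have : Complex.I * (x j : ℂ) * (θ j : ℂ) = ((x j * θ j : ℝ) : ℂ) * Complex.I := by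
    push_cast; ring
  rw [this, Complex.norm_exp_ofReal_mul_I]

lemma abs_stepChar_le_one (d : ℕ) (θ : Fin d → ℝ) : |stepChar d θ| ≤ 1 := by
  unfold stepChar
  rw [abs_mul, abs_of_nonneg (by positivity : (0 : ℝ) ≤ (d : ℝ)⁻¹)]
  have h : |∑ i, Real.cos (θ i)| ≤ d := by
    refine (Finset.abs_sum_le_sum_abs _ _).trans ?_
    refine (Finset.sum_le_sum fun i _ => Real.abs_cos_le_one (θ i)).trans ?_
    simp
  calc (d : ℝ)⁻¹ * _ ≤ (d : ℝ)⁻¹ * d := mul_le_mul_of_nonneg_left h (by positivity)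
    _ ≤ 1 := inv_mul_le_one

lemma integrable_stepChar_pow_mul (d k : ℕ) (x : Fin d → ℤ) :
    MeasureTheory.Integrable (fun θ => ((stepChar d θ : ℂ)) ^ k * latticeChar d x θ)
      (cubeMeasure d) := by
  refine MeasureTheory.Integrable.of_bound (C := 1) ?_ ?_
  · refine Continuous.aestronglyMeasurable ?_
    exact ((Complex.continuous_ofReal.comp (continuous_stepChar d)).pow k).mul
      (continuous_latticeChar d x)
  · refine Eventually.of_forall fun θ => ?_
    rw [norm_mul, norm_latticeChar, mul_one, norm_pow, Complex.norm_real, Real.norm_eq_abs]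
    exact pow_le_one₀ (abs_nonneg _) (abs_stepChar_le_one d θ)

lemma latticeChar_add_single (d : ℕ) (x : Fin d → ℤ) (i : Fin d) (c : ℤ) (θ : Fin d → ℝ) :
    latticeChar d (x + Pi.single i c) θ =
      latticeChar d x θ * Complex.exp (Complex.I * (c : ℂ) * (θ i : ℂ)) := by
  unfold latticeChar
  have : ∀ j, Complex.exp (Complex.I * (((x + Pi.single i c : Fin d → ℤ) j : ℤ) : ℂ) * (θ j : ℂ)) =
      Complex.exp (Complex.I * (x j : ℂ) * (θ j : ℂ)) *
        (if j = i then Complex.exp (Complex.I * (c : ℂ) * (θ i : ℂ)) else 1) := by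
    intro j
    by_cases h : j = i
    · subst h
      simp [← Complex.exp_add]
      congr 1; ring
    · simp [h]
  rw [Finset.prod_congr rfl fun j _ => this j, Finset.prod_mul_distrib]
  simp

lemma stepChar_mul_latticeChar (d : ℕ) (x : Fin d → ℤ) (θ : Fin d → ℝ) :
    (stepChar d θ : ℂ) * latticeChar d x θ =
      (2 * d : ℂ)⁻¹ * ∑ i : Fin d,
        (latticeChar d (x - Pi.single i 1) θ + latticeChar d (x + Pi.single i 1) θ) := by
  have h : ∀ i : Fin d,
      latticeChar d (x - Pi.single i 1) θ + latticeChar d (x + Pi.single i 1) θ =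
        2 * ((Real.cos (θ i) : ℂ) * latticeChar d x θ) := by
    intro i
    rw [sub_eq_add_neg, ← Pi.single_neg, latticeChar_add_single, latticeChar_add_single]
    rw [Complex.ofReal_cos, Complex.cos]
    push_cast
    rw [show Complex.I * -1 * (θ i : ℂ) = -(θ i : ℂ) * Complex.I by ring,
      show Complex.I * 1 * (θ i : ℂ) = (θ i : ℂ) * Complex.I by ring]
    ring
  rw [Finset.sum_congr rfl fun i _ => h i, ← Finset.mul_sum, ← Finset.sum_mul, stepChar]
  push_cast
  rw [mul_inv]
  ring

lemma srwP_ne_top {d : ℕ} (hd : 0 < d) : ∀ (k : ℕ) (x : Fin d → ℤ), srwP d k x ≠ ⊤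
  | 0, x => by unfold srwP; split_ifs <;> simp
  | k + 1, x => by
    unfold srwP
    refine ENNReal.mul_ne_top ?_ ?_
    · simp; omega
    · exact ENNReal.sum_ne_top.2 fun i _ =>
        ENNReal.add_ne_top.2 ⟨srwP_ne_top hd k _, srwP_ne_top hd k _⟩

/-- Fourier inversion for the walk, proved by checking that the integrals satisfy the recursion
defining `srwP`. -/
lemma srwP_fourier {d : ℕ} (hd : 0 < d) : ∀ (k : ℕ) (x : Fin d → ℤ),
    (2 * (Real.pi : ℂ)) ^ d * ((srwP d k x).toReal : ℂ) =
      ∫ θ, ((stepChar d θ : ℂ)) ^ k * latticeChar d x θ ∂(cubeMeasure d)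
  | 0, x => by
    simp only [pow_zero, one_mul]
    unfold latticeChar cubeMeasure
    rw [MeasureTheory.integral_fintype_prod_eq_prod
      (f := fun j (t : ℝ) => Complex.exp (Complex.I * (x j : ℂ) * (t : ℂ)))]
    simp only [integral_period_exp]
    unfold srwP
    split_ifs with h
    · subst h; simp
    · obtain ⟨j, hj⟩ := Function.ne_iff.1 h
      rw [Finset.prod_eq_zero (Finset.mem_univ j) (by simpa using hj)]
      simp
  | k + 1, x => by
    have ih := srwP_fourier hd k
    have e : ∀ θ, ((stepChar d θ : ℂ)) ^ (k + 1) * latticeChar d x θ =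
        (2 * d : ℂ)⁻¹ * ∑ i : Fin d,
          (((stepChar d θ : ℂ)) ^ k * latticeChar d (x - Pi.single i 1) θ +
            ((stepChar d θ : ℂ)) ^ k * latticeChar d (x + Pi.single i 1) θ) := by
      intro θ
      rw [pow_succ, mul_assoc, stepChar_mul_latticeChar, mul_left_comm, Finset.mul_sum]
      simp only [mul_add]
    simp only [e]
    rw [MeasureTheory.integral_const_mul, MeasureTheory.integral_finsetSum]
    · have e2 : ∀ i : Fin d, (∫ θ, (((stepChar d θ : ℂ)) ^ k * latticeChar d (x - Pi.single i 1) θ +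
            ((stepChar d θ : ℂ)) ^ k * latticeChar d (x + Pi.single i 1) θ) ∂(cubeMeasure d)) =
            (2 * (Real.pi : ℂ)) ^ d * ((srwP d k (x - Pi.single i 1)).toReal : ℂ) +
            (2 * (Real.pi : ℂ)) ^ d * ((srwP d k (x + Pi.single i 1)).toReal : ℂ) := by
        intro i
        rw [MeasureTheory.integral_add (integrable_stepChar_pow_mul d k _)
          (integrable_stepChar_pow_mul d k _), ih, ih]
      simp only [e2]
      rw [srwP, ENNReal.toReal_mul, ENNReal.toReal_sum]
      · simp only [ENNReal.toReal_add (srwP_ne_top hd k _) (srwP_ne_top hd k _)]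
        simp only [← mul_add, ← Finset.mul_sum]
        push_cast
        simp
        ring
      · exact fun i _ => ENNReal.add_ne_top.2 ⟨srwP_ne_top hd k _, srwP_ne_top hd k _⟩
    · exact fun i _ => (integrable_stepChar_pow_mul d k _).add (integrable_stepChar_pow_mul d k _)

lemma abs_cos_le_one_sub (t : ℝ) : |Real.cos t| ≤ 1 - Real.sin t ^ 2 / 2 := by
  have h := Real.sin_sq_add_cos_sq t
  rw [← sq_abs (Real.cos t)] at h
  nlinarith [Real.abs_cos_le_one t, sq_nonneg (|Real.cos t| - 1)]

lemma abs_stepChar_pow_le {d : ℕ} (hd : 0 < d) (k : ℕ) (θ : Fin d → ℝ) :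
    |stepChar d θ| ^ k ≤ ∏ i, Real.exp (-((k : ℝ) / (2 * d)) * Real.sin (θ i) ^ 2) := by
  have hd' : (0 : ℝ) < d := by exact_mod_cast hd
  have h : |stepChar d θ| ≤ Real.exp (-(1 / (2 * d)) * ∑ i, Real.sin (θ i) ^ 2) := by
    have h1 : |stepChar d θ| ≤ 1 - (1 / (2 * d)) * ∑ i, Real.sin (θ i) ^ 2 := by
      unfold stepChar
      rw [abs_mul, abs_of_nonneg (by positivity : (0 : ℝ) ≤ (d : ℝ)⁻¹)]
      have h2 : |∑ i, Real.cos (θ i)| ≤ ∑ i : Fin d, (1 - Real.sin (θ i) ^ 2 / 2) :=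
        (Finset.abs_sum_le_sum_abs _ _).trans
          (Finset.sum_le_sum fun i _ => abs_cos_le_one_sub (θ i))
      rw [Finset.sum_sub_distrib, ← Finset.sum_div] at h2
      simp only [Finset.sum_const, Finset.card_univ, Fintype.card_fin, nsmul_eq_mul, mul_one] at h2
      refine (mul_le_mul_of_nonneg_left h2 (by positivity)).trans_eq ?_
      field_simp
    have h3 := Real.add_one_le_exp (-(1 / (2 * d)) * ∑ i, Real.sin (θ i) ^ 2)
    linarith
  refine (pow_le_pow_left₀ (abs_nonneg _) h k).trans_eq ?_
  rw [← Real.exp_nat_mul, ← Real.exp_sum, ← Finset.mul_sum]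
  congr 1
  ring

/-- On a period, `sin² t` dominates a multiple of the squared distance of `t` to the nearest of
`0`, `π`, `-π`; the sum of three Gaussians covers the three cases. -/
lemma exp_sin_sq_le {c t : ℝ} (hc : 0 < c) (h1 : -Real.pi < t) (h2 : t ≤ Real.pi) :
    Real.exp (-c * Real.sin t ^ 2) ≤
      Real.exp (-(c * (2 / Real.pi) ^ 2) * t ^ 2) +
      Real.exp (-(c * (2 / Real.pi) ^ 2) * (t - Real.pi) ^ 2) +
      Real.exp (-(c * (2 / Real.pi) ^ 2) * (t + Real.pi) ^ 2) := by
  have hpi := Real.pi_pos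
  have key : ∀ v : ℝ, |v| ≤ Real.pi / 2 → Real.sin v ^ 2 = Real.sin t ^ 2 →
      Real.exp (-c * Real.sin t ^ 2) ≤ Real.exp (-(c * (2 / Real.pi) ^ 2) * v ^ 2) := by
    intro v hv he
    apply Real.exp_le_exp.2
    have h := Real.mul_le_sin (abs_nonneg v) hv
    have h' := pow_le_pow_left₀ (by positivity) h 2
    have h3 : Real.sin |v| ^ 2 = Real.sin v ^ 2 := by
      rcases abs_choice v with h | h <;> rw [h]
      rw [Real.sin_neg, neg_sq]
    rw [h3, he, mul_pow, sq_abs] at h'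
    nlinarith
  have p1 := Real.exp_pos (-(c * (2 / Real.pi) ^ 2) * t ^ 2)
  have p2 := Real.exp_pos (-(c * (2 / Real.pi) ^ 2) * (t - Real.pi) ^ 2)
  have p3 := Real.exp_pos (-(c * (2 / Real.pi) ^ 2) * (t + Real.pi) ^ 2)
  by_cases ha : Real.pi / 2 < t
  · have := key (t - Real.pi) (abs_le.2 ⟨by linarith, by linarith⟩)
      (by rw [Real.sin_sub_pi, neg_sq])
    linarith
  · by_cases hb : t < -(Real.pi / 2)
    · have := key (t + Real.pi) (abs_le.2 ⟨by linarith, by linarith⟩)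
        (by rw [Real.sin_add_pi, neg_sq])
      linarith
    · have := key t (abs_le.2 ⟨by linarith, by linarith⟩) rfl
      linarith

lemma integral_period_exp_sin_sq_le {c : ℝ} (hc : 0 < c) :
    ∫ t, Real.exp (-c * Real.sin t ^ 2) ∂periodMeasure ≤
      3 * Real.sqrt (Real.pi / (c * (2 / Real.pi) ^ 2)) := by
  have hpi := Real.pi_pos
  set b := c * (2 / Real.pi) ^ 2 with hb
  have hb0 : 0 < b := by positivity
  have I0 := integrable_exp_neg_mul_sq hb0
  have I1 : MeasureTheory.Integrable (fun t : ℝ => Real.exp (-b * (t - Real.pi) ^ 2)) :=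
    I0.comp_sub_right Real.pi
  have I2 : MeasureTheory.Integrable (fun t : ℝ => Real.exp (-b * (t + Real.pi) ^ 2)) :=
    I0.comp_add_right Real.pi
  have I01 : MeasureTheory.Integrable
      (fun t : ℝ => Real.exp (-b * t ^ 2) + Real.exp (-b * (t - Real.pi) ^ 2)) := I0.add I1
  have hI := I01.add I2
  calc ∫ t, Real.exp (-c * Real.sin t ^ 2) ∂periodMeasure
      ≤ ∫ t, (Real.exp (-b * t ^ 2) + Real.exp (-b * (t - Real.pi) ^ 2) +
          Real.exp (-b * (t + Real.pi) ^ 2)) ∂periodMeasure := by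
        unfold periodMeasure
        refine MeasureTheory.setIntegral_mono_on ?_ hI.integrableOn measurableSet_Ioc
          fun t ht => exp_sin_sq_le hc ht.1 ht.2
        exact Continuous.integrableOn_Ioc (by fun_prop)
    _ ≤ ∫ t, (Real.exp (-b * t ^ 2) + Real.exp (-b * (t - Real.pi) ^ 2) +
          Real.exp (-b * (t + Real.pi) ^ 2)) := by
        unfold periodMeasure
        exact MeasureTheory.setIntegral_le_integral hI
          (Eventually.of_forall fun t => by positivity)
    _ = 3 * Real.sqrt (Real.pi / b) := by
        rw [MeasureTheory.integral_add I01 I2, MeasureTheory.integral_add I0 I1]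
        rw [MeasureTheory.integral_sub_right_eq_self (fun t : ℝ => Real.exp (-b * t ^ 2)),
          MeasureTheory.integral_add_right_eq_self (fun t : ℝ => Real.exp (-b * t ^ 2)),
          integral_gaussian]
        ring

/-- On-diagonal heat kernel bound `P(X_k = x) ≤ A k^{-d/2}`: the Fourier integrand is dominated by a
product of functions of one coordinate, each with integral of order `k^{-1/2}`. -/
lemma srwP_toReal_le {d : ℕ} (hd : 0 < d) : ∃ A : ℝ, 0 < A ∧ ∀ (k : ℕ) (x : Fin d → ℤ), 1 ≤ k →
    (srwP d k x).toReal ≤ A * (k : ℝ) ^ (-((d : ℝ) / 2)) := by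
  have hpi := Real.pi_pos
  have hd' : (0 : ℝ) < d := by exact_mod_cast hd
  set B := 3 * Real.sqrt (Real.pi / (1 / (2 * d) * (2 / Real.pi) ^ 2)) with hB
  have hB0 : 0 < B := by positivity
  refine ⟨B ^ d / (2 * Real.pi) ^ d, by positivity, fun k x hk => ?_⟩
  have hk' : (0 : ℝ) < k := by exact_mod_cast hk
  have h1 : (2 * Real.pi) ^ d * (srwP d k x).toReal =
      ‖∫ θ, ((stepChar d θ : ℂ)) ^ k * latticeChar d x θ ∂(cubeMeasure d)‖ := by
    rw [← srwP_fourier hd k x, norm_mul, norm_pow, norm_mul, Complex.norm_real, Complex.norm_real]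
    simp [abs_of_pos hpi]
  have h2 : ‖∫ θ, ((stepChar d θ : ℂ)) ^ k * latticeChar d x θ ∂(cubeMeasure d)‖ ≤
      ∫ θ, ∏ i, Real.exp (-((k : ℝ) / (2 * d)) * Real.sin (θ i) ^ 2) ∂(cubeMeasure d) := by
    refine (MeasureTheory.norm_integral_le_integral_norm _).trans ?_
    refine MeasureTheory.integral_mono (integrable_stepChar_pow_mul d k x).norm ?_ ?_
    · refine MeasureTheory.Integrable.of_bound (C := 1)
        (Continuous.aestronglyMeasurable (by fun_prop)) (Eventually.of_forall fun θ => ?_)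
      rw [Real.norm_eq_abs, abs_of_nonneg (Finset.prod_nonneg fun i _ => (Real.exp_pos _).le)]
      refine Finset.prod_le_one (fun i _ => (Real.exp_pos _).le) fun i _ => ?_
      rw [Real.exp_le_one_iff]
      have : 0 ≤ (k : ℝ) / (2 * d) * Real.sin (θ i) ^ 2 := by positivity
      linarith
    · intro θ
      simp only [norm_mul, norm_latticeChar, mul_one, norm_pow, Complex.norm_real, Real.norm_eq_abs]
      exact abs_stepChar_pow_le hd k θ
  have h3 : ∫ θ, ∏ i, Real.exp (-((k : ℝ) / (2 * d)) * Real.sin (θ i) ^ 2) ∂(cubeMeasure d) =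
      (∫ t, Real.exp (-((k : ℝ) / (2 * d)) * Real.sin t ^ 2) ∂periodMeasure) ^ d := by
    unfold cubeMeasure
    rw [MeasureTheory.integral_fintype_prod_eq_prod
      (f := fun _ (t : ℝ) => Real.exp (-((k : ℝ) / (2 * d)) * Real.sin t ^ 2))]
    simp
  have h4 : ∫ t, Real.exp (-((k : ℝ) / (2 * d)) * Real.sin t ^ 2) ∂periodMeasure ≤
      B * (k : ℝ) ^ (-(1 / 2 : ℝ)) := by
    refine (integral_period_exp_sin_sq_le (by positivity)).trans_eq ?_
    rw [Real.rpow_neg hk'.le, ← Real.sqrt_eq_rpow, hB, mul_assoc, ← Real.sqrt_inv,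
      ← Real.sqrt_mul (by positivity)]
    congr 2
    field_simp
  have h5 := pow_le_pow_left₀ (MeasureTheory.integral_nonneg fun t => (Real.exp_pos _).le) h4 d
  have h6 : ((k : ℝ) ^ (-(1 / 2 : ℝ))) ^ d = (k : ℝ) ^ (-((d : ℝ) / 2)) := by
    rw [← Real.rpow_mul_natCast hk'.le]
    congr 1; ring
  rw [mul_pow, h6] at h5
  rw [div_mul_eq_mul_div, le_div_iff₀ (by positivity), mul_comm, h1]
  exact (h2.trans_eq h3).trans h5

/-! ### Finiteness, harmonicity and positivity of the Green's function -/

/-- The squared Euclidean norm on `ℤ^d`, as a real number. -/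
def sqN (d : ℕ) (x : Fin d → ℤ) : ℝ := ∑ i, ((x i : ℝ)) ^ 2

lemma green_eq (d : ℕ) (x : Fin d → ℤ) :
    green d x = (if x = 0 then 1 else 0) + (2 * d : ENNReal)⁻¹ *
        ∑ i : Fin d, (green d (x - Pi.single i 1) + green d (x + Pi.single i 1)) := by
  unfold green
  rw [tsum_eq_zero_add' ENNReal.summable]
  simp only [srwP]
  rw [ENNReal.tsum_mul_left, Summable.tsum_finsetSum fun i _ => ENNReal.summable]
  simp only [ENNReal.tsum_add]

lemma green_ne_top {d : ℕ} (hd : 2 < d) (x : Fin d → ℤ) : green d x ≠ ⊤ := by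
  obtain ⟨A, hA, h⟩ := srwP_toReal_le (show 0 < d by omega)
  have hd' : (2 : ℝ) < d := by exact_mod_cast hd
  have hs : Summable fun k : ℕ => A * (k : ℝ) ^ (-((d : ℝ) / 2)) :=
    (Real.summable_nat_rpow.2 (by linarith)).mul_left A
  have hs2 : Summable fun k : ℕ => (srwP d k x).toReal := by
    refine Summable.of_norm_bounded_eventually_nat hs ?_
    filter_upwards [eventually_ge_atTop 1] with k hk
    rw [Real.norm_eq_abs, abs_of_nonneg ENNReal.toReal_nonneg]
    exact h k x hk
  have e : green d x = ENNReal.ofReal (∑' k, (srwP d k x).toReal) := by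
    rw [ENNReal.ofReal_tsum_of_nonneg (fun _ => ENNReal.toReal_nonneg) hs2]
    unfold green
    exact tsum_congr fun k => (ENNReal.ofReal_toReal (srwP_ne_top (by omega) k x)).symm
  rw [e]
  exact ENNReal.ofReal_ne_top

lemma green_toReal_harmonic {d : ℕ} (hd : 2 < d) {x : Fin d → ℤ} (hx : x ≠ 0) :
    (green d x).toReal = (2 * d : ℝ)⁻¹ *
        ∑ i : Fin d, ((green d (x - Pi.single i 1)).toReal +
          (green d (x + Pi.single i 1)).toReal) := by
  rw [green_eq, if_neg hx, zero_add, ENNReal.toReal_mul, ENNReal.toReal_sum]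
  · simp only [ENNReal.toReal_add (green_ne_top hd _) (green_ne_top hd _)]
    simp
  · exact fun i _ => ENNReal.add_ne_top.2 ⟨green_ne_top hd _, green_ne_top hd _⟩

/-- By `green_eq`, positivity of `green d` passes from a site to its neighbours, and
`green d 0 ≥ 1`. -/
lemma green_pos {d : ℕ} (x : Fin d → ℤ) : 0 < green d x := by
  have hnb : ∀ (y : Fin d → ℤ) (i : Fin d), (0 < green d (y - Pi.single i 1) ∨
      0 < green d (y + Pi.single i 1)) → 0 < green d y := by
    intro y i h
    rw [green_eq]
    refine lt_of_lt_of_le ?_ le_add_self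
    refine ENNReal.mul_pos ?_ ?_
    · simp [ENNReal.mul_eq_top]
    · intro h0
      rw [Finset.sum_eq_zero_iff] at h0
      have := h0 i (Finset.mem_univ i)
      rw [add_eq_zero] at this
      rcases h with h | h
      · exact h.ne' this.1
      · exact h.ne' this.2
  have hline : ∀ (y : Fin d → ℤ) (i : Fin d) (n : ℤ), 0 < green d y →
      0 < green d (y + Pi.single i n) := by
    intro y i n hy
    induction n using Int.induction_on with
    | zero => simpa using hy
    | succ n ih =>
      refine hnb _ i (Or.inl ?_)
      rwa [Pi.single_add, ← add_assoc, add_sub_cancel_right]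
    | pred n ih =>
      refine hnb _ i (Or.inr ?_)
      rwa [Pi.single_sub, ← add_sub_assoc, sub_add_cancel]
  have h0 : 0 < green d 0 := by
    rw [green_eq, if_pos rfl]
    exact lt_of_lt_of_le one_pos le_self_add
  have hs : ∀ s : Finset (Fin d), 0 < green d (∑ i ∈ s, Pi.single i (x i)) := by
    intro s
    induction s using Finset.induction_on with
    | empty => simpa using h0
    | insert i s hi ih =>
      rw [Finset.sum_insert hi, add_comm]
      exact hline _ i _ ih
  have := hs Finset.univ
  rwa [Finset.univ_sum_single] at this

/-! ### Lower bound on the Green's function -/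

lemma finite_sqN_lt (d : ℕ) (M : ℝ) : {x : Fin d → ℤ | sqN d x < M}.Finite := by
  refine (Set.finite_Icc (fun _ : Fin d => -⌈M⌉) (fun _ => ⌈M⌉)).subset ?_
  intro x hx
  have h : ∀ i, |x i| ≤ ⌈M⌉ := by
    intro i
    have h1 : (x i : ℝ) ^ 2 ≤ sqN d x :=
      Finset.single_le_sum (f := fun i => (x i : ℝ) ^ 2) (fun i _ => sq_nonneg _)
        (Finset.mem_univ i)
    have h2 : |x i| ≤ x i ^ 2 := by
      rw [← sq_abs]
      nlinarith [abs_nonneg (x i), Int.le_self_sq |x i|]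
    have h3 : ((|x i| : ℤ) : ℝ) ≤ (x i : ℝ) ^ 2 := by exact_mod_cast h2
    have h4 : ((|x i| : ℤ) : ℝ) ≤ (⌈M⌉ : ℝ) := by
      have h5 : sqN d x < M := hx
      linarith [Int.le_ceil M]
    exact_mod_cast h4
  exact ⟨fun i => (abs_le.1 (h i)).1, fun i => (abs_le.1 (h i)).2⟩

lemma sqN_add_single (d : ℕ) (x : Fin d → ℤ) (i : Fin d) (c : ℤ) :
    sqN d (x + Pi.single i c) = sqN d x + 2 * c * x i + c ^ 2 := by
  unfold sqN
  rw [← Finset.add_sum_erase _ _ (Finset.mem_univ i),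
    ← Finset.add_sum_erase (a := i) _ (fun i => (x i : ℝ) ^ 2) (Finset.mem_univ i)]
  have : ∀ j ∈ Finset.univ.erase i, (((x + Pi.single i c : Fin d → ℤ) j : ℤ) : ℝ) ^ 2 =
      (x j : ℝ) ^ 2 := by
    intro j hj
    simp [Finset.ne_of_mem_erase hj]
  rw [Finset.sum_congr rfl this]
  simp
  ring

/-- The barrier `(‖x‖² - 2d)^{-(d-2)/2}`, comparable to `‖x‖^{2-d}` at infinity. The shift by `2d`
makes it strictly subharmonic far from the origin. For `‖x‖² < 2d` its values are those of
`Real.rpow` at a negative base and carry no meaning. -/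
def barrier (d : ℕ) (x : Fin d → ℤ) : ℝ := (sqN d x - 2 * d) ^ (-(((d : ℝ) - 2) / 2))

/-- With `s = ‖x‖²`, `p = (d-2)/2` and `u = s + 1 - 2d`, the neighbours of `x` contribute
`(u ± 2xᵢ)^{-p}`. Since `2(p+1) = d`, `rpow_neg_sym_ge'` bounds their mean below by
`u^{-p} (1 + p s / u²)`, where `s = u + 4p + 3`; this beats `(u - 1)^{-p}` by
`one_sub_rpow_neg_lt`. -/
lemma barrier_strict_subharmonic {d : ℕ} (hd : 2 < d) {x : Fin d → ℤ}
    (hx : 16 * (d : ℝ) ^ 2 ≤ sqN d x) :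
    barrier d x < (2 * d : ℝ)⁻¹ *
      ∑ i : Fin d, (barrier d (x - Pi.single i 1) + barrier d (x + Pi.single i 1)) := by
  have hd' : (3 : ℝ) ≤ d := by exact_mod_cast hd
  set p : ℝ := ((d : ℝ) - 2) / 2 with hp
  have hp0 : 0 < p := by rw [hp]; linarith
  have hdp : (d : ℝ) = 2 * p + 2 := by rw [hp]; ring
  set s := sqN d x with hs
  set u : ℝ := s + 1 - 2 * d with hu
  have hu2 : s / 2 ≤ u := by rw [hu]; nlinarith
  have hs0 : 144 ≤ s := by nlinarith
  have hu0 : 0 < u := by linarith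
  have hus : 4 * s < u ^ 2 := by nlinarith
  have hup : 2 * p ≤ u := by nlinarith
  have hterm : ∀ i : Fin d, u ^ (-p) * (2 + p * (p + 1) * (2 * (x i : ℝ)) ^ 2 / u ^ 2) ≤
      barrier d (x - Pi.single i 1) + barrier d (x + Pi.single i 1) := by
    intro i
    have h1 : (x i : ℝ) ^ 2 ≤ s :=
      Finset.single_le_sum (f := fun i => (x i : ℝ) ^ 2) (fun i _ => sq_nonneg _)
        (Finset.mem_univ i)
    have h := rpow_neg_sym_ge' (t := 2 * (x i : ℝ)) hp0 hu0
      (abs_lt_of_sq_lt_sq (by nlinarith) hu0.le)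
    refine h.trans_eq ?_
    rw [add_comm]
    unfold barrier
    rw [sub_eq_add_neg x, ← Pi.single_neg, sqN_add_single, sqN_add_single]
    congr 2
    · rw [hu]; push_cast; ring
    · rw [hu]; push_cast; ring
  have hsum := Finset.sum_le_sum fun i (_ : i ∈ Finset.univ) => hterm i
  have hsum2 : ∑ i : Fin d, u ^ (-p) * (2 + p * (p + 1) * (2 * (x i : ℝ)) ^ 2 / u ^ 2) =
      u ^ (-p) * (2 * d + p * (p + 1) * 4 * s / u ^ 2) := by
    rw [← Finset.mul_sum, Finset.sum_add_distrib, ← Finset.sum_div, ← Finset.mul_sum]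
    simp only [mul_pow]
    rw [← Finset.mul_sum]
    simp only [Finset.sum_const, Finset.card_univ, Fintype.card_fin, nsmul_eq_mul]
    rw [hs, sqN]
    ring
  rw [hsum2] at hsum
  have hz := one_sub_rpow_neg_lt (p := p) (z := 1 / u) hp0 (by positivity)
    (by rw [div_le_div_iff₀ hu0 two_pos]; linarith) (by rw [mul_one_div, div_le_one hu0]; exact hup)
  have hb : barrier d x = u ^ (-p) * (1 - 1 / u) ^ (-p) := by
    rw [← Real.mul_rpow hu0.le]
    · unfold barrier
      congr 1
      rw [mul_sub, mul_one_div_cancel hu0.ne', hu]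
      ring
    · rw [sub_nonneg, div_le_one hu0]; linarith
  rw [hb]
  calc u ^ (-p) * (1 - 1 / u) ^ (-p)
      < u ^ (-p) * (1 + p * (1 / u) + p * (3 + 4 * p) * (1 / u) ^ 2) :=
        mul_lt_mul_of_pos_left hz (Real.rpow_pos_of_pos hu0 _)
    _ = (2 * d : ℝ)⁻¹ * (u ^ (-p) * (2 * d + p * (p + 1) * 4 * s / u ^ 2)) := by
        have e : s = u + 4 * p + 3 := by rw [hu, hdp]; ring
        rw [e, hdp]
        field_simp
        ring
    _ ≤ _ := mul_le_mul_of_nonneg_left hsum (by positivity)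

/-- `green d x ≥ c ‖x‖^{2-d}`, by the maximum principle applied to `c * barrier - green`: this
difference is negative on a large ball if `c` is small, is bounded above by a function tending to
`0` at infinity, and is strictly subharmonic off the ball, so it cannot have a positive maximum. -/
lemma green_lower {d : ℕ} (hd : 2 < d) : ∃ c : ℝ, 0 < c ∧ ∀ x : Fin d → ℤ, x ≠ 0 →
    c * sqN d x ^ (-(((d : ℝ) - 2) / 2)) ≤ (green d x).toReal := by
  have hd' : (3 : ℝ) ≤ d := by exact_mod_cast hd
  set p : ℝ := ((d : ℝ) - 2) / 2 with hp
  have hp0 : 0 < p := by rw [hp]; linarith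
  have hpos : ∀ x : Fin d → ℤ, 0 < (green d x).toReal := fun x =>
    ENNReal.toReal_pos (green_pos x).ne' (green_ne_top hd x)
  have hfin := finite_sqN_lt d (16 * (d : ℝ) ^ 2)
  have hsmall : ∀ v : (Fin d → ℤ) → ℝ, ∀ᶠ c : ℝ in nhdsWithin 0 (Set.Ioi 0),
      ∀ x ∈ {x : Fin d → ℤ | sqN d x < 16 * (d : ℝ) ^ 2}, c * v x < (green d x).toReal := by
    intro v
    rw [Filter.eventually_all_finite hfin]
    intro x _
    have ht : Tendsto (fun c : ℝ => c * v x) (nhds 0) (nhds (0 * v x)) :=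
      (continuous_id.mul continuous_const).tendsto 0
    rw [zero_mul] at ht
    exact nhdsWithin_le_nhds (ht.eventually_lt_const (hpos x))
  obtain ⟨c, ⟨hc1, hc2⟩, hc0⟩ := ((hsmall (barrier d)).and
    (hsmall fun x => sqN d x ^ (-p))).and self_mem_nhdsWithin |>.exists
  have hc0 : 0 < c := hc0
  have hmax : ∀ x, c * barrier d x ≤ (green d x).toReal := by
    by_contra! hcon
    obtain ⟨x₀, hx₀⟩ := hcon
    set f : (Fin d → ℤ) → ℝ := fun x => c * barrier d x - (green d x).toReal with hf
    have hf0 : 0 < f x₀ := by rw [hf]; simpa using hx₀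
    have hlim : Tendsto (fun t : ℝ => c * (t - 2 * d) ^ (-p)) atTop (nhds (c * 0)) :=
      ((tendsto_rpow_neg_atTop hp0).comp (tendsto_atTop_add_const_right _ _ tendsto_id)).const_mul c
    rw [mul_zero] at hlim
    obtain ⟨M, hM⟩ := eventually_atTop.1 (hlim.eventually_lt_const hf0)
    have hT : {x | f x₀ ≤ f x}.Finite := by
      refine (finite_sqN_lt d M).subset fun x hx => ?_
      by_contra hxM
      have h1 := hM (sqN d x) (not_lt.1 hxM)
      have h2 : f x₀ ≤ c * barrier d x - (green d x).toReal := hx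
      have h3 := hpos x
      unfold barrier at h2
      linarith
    -- The superlevel set is finite, so `f` attains a global maximum, at `y`.
    obtain ⟨y, hy, hymax⟩ := Set.exists_max_image _ f hT ⟨x₀, le_refl (f x₀)⟩
    have hy0 : f x₀ ≤ f y := hy
    have hall : ∀ z, f z ≤ f y := by
      intro z
      by_cases hz : f x₀ ≤ f z
      · exact hymax z hz
      · linarith
    have hyS : 16 * (d : ℝ) ^ 2 ≤ sqN d y := by
      by_contra hlt
      have h1 := hc1 y (not_le.1 hlt)
      have h2 : 0 < c * barrier d y - (green d y).toReal := hf0.trans_le hy0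
      linarith
    have hyne : y ≠ 0 := by
      rintro rfl
      simp [sqN] at hyS
      nlinarith
    have hsub := mul_lt_mul_of_pos_left (barrier_strict_subharmonic hd hyS) hc0
    have hharm := green_toReal_harmonic hd hyne
    have havg : f y < (2 * d : ℝ)⁻¹ *
        ∑ i : Fin d, (f (y - Pi.single i 1) + f (y + Pi.single i 1)) := by
      have e : (2 * d : ℝ)⁻¹ * ∑ i : Fin d, (f (y - Pi.single i 1) + f (y + Pi.single i 1)) =
          c * ((2 * d : ℝ)⁻¹ * ∑ i : Fin d,
            (barrier d (y - Pi.single i 1) + barrier d (y + Pi.single i 1))) -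
          (2 * d : ℝ)⁻¹ * ∑ i : Fin d, ((green d (y - Pi.single i 1)).toReal +
            (green d (y + Pi.single i 1)).toReal) := by
        rw [mul_left_comm, ← mul_sub, Finset.mul_sum (a := c), ← Finset.sum_sub_distrib]
        congr 1
        exact Finset.sum_congr rfl fun i _ => by rw [hf]; ring
      rw [e, ← hharm]
      exact sub_lt_sub_right hsub _
    have hle : (2 * d : ℝ)⁻¹ * ∑ i : Fin d, (f (y - Pi.single i 1) + f (y + Pi.single i 1)) ≤
        (2 * d : ℝ)⁻¹ * ∑ i : Fin d, (f y + f y) :=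
      mul_le_mul_of_nonneg_left
        (Finset.sum_le_sum fun i _ => add_le_add (hall _) (hall _)) (by positivity)
    have heq : (2 * d : ℝ)⁻¹ * ∑ i : Fin d, (f y + f y) = f y := by
      simp only [Finset.sum_const, Finset.card_univ, Fintype.card_fin, nsmul_eq_mul]
      field_simp
      ring
    linarith
  refine ⟨c, hc0, fun x _ => ?_⟩
  by_cases hx : sqN d x < 16 * (d : ℝ) ^ 2
  · exact (hc2 x hx).le
  · have hx := not_lt.1 hx
    refine le_trans ?_ (hmax x)
    refine mul_le_mul_of_nonneg_left ?_ hc0.le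
    exact Real.rpow_le_rpow_of_nonpos (by nlinarith) (by linarith) (by linarith)

/-! ### Comparison of the two Green's functions -/

/-- The part of `∑ (αk)^γ P(X_k = x)` from times `k > N`, bounded through the on-diagonal bound;
`1 < d / 2 - γ` makes the resulting series `∑ k^{γ-d/2}` converge. -/
lemma tail_weighted_le {d : ℕ} {A γ α : ℝ} (hA : 0 < A) (hα : 0 < α)
    (hs : 1 < (d : ℝ) / 2 - γ) (hd : 0 < d)
    (hP : ∀ (k : ℕ) (x : Fin d → ℤ), 1 ≤ k →
      (srwP d k x).toReal ≤ A * (k : ℝ) ^ (-((d : ℝ) / 2)))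
    (x : Fin d → ℤ) {N : ℕ} (hN : 1 ≤ N) :
    ∑' j : ℕ, ENNReal.ofReal ((α * ((j + (N + 1) : ℕ) : ℝ)) ^ γ) * srwP d (j + (N + 1)) x ≤
      ENNReal.ofReal (A / ((d : ℝ) / 2 - γ - 1) *
        ((α * N) ^ γ * (N : ℝ) ^ (-(((d : ℝ) - 2) / 2)))) := by
  set s := (d : ℝ) / 2 - γ with hsdef
  have hN0 : (0 : ℝ) < N := by exact_mod_cast hN
  have hterm : ∀ j : ℕ,
      ENNReal.ofReal ((α * ((j + (N + 1) : ℕ) : ℝ)) ^ γ) * srwP d (j + (N + 1)) x ≤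
        ENNReal.ofReal (A * α ^ γ * ((N + 1 + j : ℕ) : ℝ) ^ (-s)) := by
    intro j
    rw [← ENNReal.ofReal_toReal (srwP_ne_top hd (j + (N + 1)) x),
      ← ENNReal.ofReal_mul (by positivity)]
    apply ENNReal.ofReal_le_ofReal
    have h := hP (j + (N + 1)) x (by omega)
    rw [show N + 1 + j = j + (N + 1) by ring]
    set K : ℝ := ((j + (N + 1) : ℕ) : ℝ) with hK
    have hK0 : 0 < K := by rw [hK]; positivity
    calc (α * K) ^ γ * (srwP d (j + (N + 1)) x).toReal
        ≤ (α * K) ^ γ * (A * K ^ (-((d : ℝ) / 2))) :=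
          mul_le_mul_of_nonneg_left h (by positivity)
      _ = A * α ^ γ * K ^ (-s) := by
          rw [Real.mul_rpow hα.le hK0.le, show -s = γ + -((d : ℝ) / 2) by rw [hsdef]; ring,
            Real.rpow_add hK0]
          ring
  refine (ENNReal.tsum_le_tsum hterm).trans ?_
  refine ENNReal.tsum_le_of_sum_range_le fun n => ?_
  rw [← ENNReal.ofReal_sum_of_nonneg fun j _ => by positivity, ← Finset.mul_sum]
  apply ENNReal.ofReal_le_ofReal
  have hsum := rpow_sum_tail_le hs hN n
  have h2 : ∑ j ∈ Finset.range n, ((N + 1 + j : ℕ) : ℝ) ^ (-s) ≤ (N : ℝ) ^ (1 - s) / (s - 1) := by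
    refine hsum.trans ?_
    refine div_le_div_of_nonneg_right ?_ (by linarith)
    have : 0 ≤ ((N + n : ℕ) : ℝ) ^ (1 - s) := by positivity
    linarith
  refine (mul_le_mul_of_nonneg_left h2 (by positivity)).trans_eq ?_
  rw [Real.mul_rpow hα.le hN0.le,
    show 1 - s = γ + -(((d : ℝ) - 2) / 2) by rw [hsdef]; ring, Real.rpow_add hN0]
  ring

/-- The comparison for a general exponent `0 < γ ≤ 1` with `γ < (d - 2) / 2`, without any upper
bound on `‖x‖`. -/
lemma green_sub_greenK_le {d : ℕ} (hd : 2 < d) {γ : ℝ} (hγ : 0 < γ) (hγ1 : γ ≤ 1)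
    (hs : 1 < (d : ℝ) / 2 - γ) : ∃ C : ℝ, 0 < C ∧ ∀ α ∈ Set.Ioo (0 : ℝ) 1,
      ∀ x : Fin d → ℤ, x ≠ 0 →
        green d x - greenK d α x ≤ ENNReal.ofReal (C * (α * sqN d x) ^ γ) * green d x := by
  obtain ⟨A, hA, hP⟩ := srwP_toReal_le (show 0 < d by omega)
  obtain ⟨c, hc, hlow⟩ := green_lower hd
  have hs1 : 0 < (d : ℝ) / 2 - γ - 1 := by linarith
  refine ⟨1 + A / ((d : ℝ) / 2 - γ - 1) / c, by positivity, fun α hα x hx => ?_⟩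
  obtain ⟨N, hN⟩ : ∃ N : ℕ, sqN d x = N := by
    refine ⟨(∑ i, x i ^ 2).toNat, ?_⟩
    have h0 : 0 ≤ ∑ i, x i ^ 2 := Finset.sum_nonneg fun i _ => sq_nonneg _
    have : (((∑ i, x i ^ 2).toNat : ℤ) : ℝ) = ((∑ i, x i ^ 2 : ℤ) : ℝ) := by
      rw [Int.toNat_of_nonneg h0]
    unfold sqN
    push_cast at this ⊢
    exact this.symm
  have hN1 : 1 ≤ N := by
    obtain ⟨i, hi⟩ := Function.ne_iff.1 hx
    have h1 : (x i : ℝ) ^ 2 ≤ sqN d x :=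
      Finset.single_le_sum (f := fun i => (x i : ℝ) ^ 2) (fun i _ => sq_nonneg _)
        (Finset.mem_univ i)
    have h2 : (0 : ℝ) < (x i : ℝ) ^ 2 := by
      have : (x i : ℝ) ≠ 0 := by exact_mod_cast hi
      positivity
    have : (0 : ℝ) < N := by linarith
    exact_mod_cast this
  have hlowx := hlow x hx
  rw [hN] at hlowx ⊢
  have hN0 : (0 : ℝ) < N := by exact_mod_cast hN1
  have hα0 := hα.1
  -- `W k` bounds the `k`-th term of `green - greenK`; times `k ≤ N` are controlled by `green` itself.
  set W : ℕ → ENNReal := fun k => ENNReal.ofReal ((α * (k : ℝ)) ^ γ) * srwP d k x with hW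
  have h1 : green d x ≤ ∑' k, W k + greenK d α x := by
    unfold green greenK
    rw [← ENNReal.tsum_add]
    refine ENNReal.tsum_le_tsum fun k => ?_
    rw [hW]
    simp only
    rw [← add_mul, ← ENNReal.ofReal_add (by positivity) (pow_nonneg (by linarith [hα.2]) k)]
    refine le_mul_of_one_le_left' ?_
    rw [ENNReal.one_le_ofReal]
    exact one_le_rpow_add_pow hα.1 hα.2 hγ hγ1 k
  have h2 : ∑ k ∈ Finset.range (N + 1), W k ≤ ENNReal.ofReal ((α * N) ^ γ) * green d x := by
    have : ∀ k ∈ Finset.range (N + 1), W k ≤ ENNReal.ofReal ((α * N) ^ γ) * srwP d k x := by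
      intro k hk
      rw [hW]
      refine mul_le_mul_left (ENNReal.ofReal_le_ofReal ?_) _
      have hkN : (k : ℝ) ≤ N := by
        have := Finset.mem_range.1 hk
        exact_mod_cast Nat.lt_succ_iff.1 this
      exact Real.rpow_le_rpow (by positivity) (mul_le_mul_of_nonneg_left hkN hα0.le) hγ.le
    refine (Finset.sum_le_sum this).trans ?_
    rw [← Finset.mul_sum]
    exact mul_le_mul_right (ENNReal.sum_le_tsum _) _
  have h3 := tail_weighted_le hA hα.1 hs (by omega) hP x hN1
  have hsplit : ∑' k, W k = ∑ k ∈ Finset.range (N + 1), W k + ∑' j, W (j + (N + 1)) :=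
    (Summable.sum_add_tsum_nat_add' ENNReal.summable).symm
  rw [tsub_le_iff_right]
  refine h1.trans (add_le_add_left ?_ _)
  rw [hsplit, add_mul, one_mul, ENNReal.ofReal_add (by positivity) (by positivity), add_mul]
  refine add_le_add h2 (h3.trans ?_)
  rw [← ENNReal.ofReal_toReal (green_ne_top hd x), ← ENNReal.ofReal_mul (by positivity)]
  apply ENNReal.ofReal_le_ofReal
  have h4 : (N : ℝ) ^ (-(((d : ℝ) - 2) / 2)) ≤ (green d x).toReal / c := by
    rw [le_div_iff₀ hc, mul_comm]
    exact hlowx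
  calc A / ((d : ℝ) / 2 - γ - 1) * ((α * N) ^ γ * (N : ℝ) ^ (-(((d : ℝ) - 2) / 2)))
      ≤ A / ((d : ℝ) / 2 - γ - 1) * ((α * N) ^ γ * ((green d x).toReal / c)) := by gcongr
    _ = _ := by ring

/-- For `d > 2` and `C₀ > 0` there are `C > 0` and `α₀ ∈ (0,1)`,
depending only on `d` and `C₀`, such that for all `α ∈ (0, α₀)` and all `x` with
`0 < ‖x‖ ≤ C₀/√α`: `g(x) − g_α(x) ≤ C (‖x‖√α)^{2d(d−2)/(d²+2d−4)} g(x)`. -/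
theorem killed_green_near_bound (d : ℕ) (hd : 2 < d) (C₀ : ℝ) (hC₀ : 0 < C₀) :
    ∃ C α₀ : ℝ, 0 < C ∧ α₀ ∈ Set.Ioo (0 : ℝ) 1 ∧
      ∀ α ∈ Set.Ioo (0 : ℝ) α₀, ∀ x : Fin d → ℤ,
        0 < nrmZ d x → nrmZ d x ≤ C₀ / Real.sqrt α →
          green d x - greenK d α x ≤
            ENNReal.ofReal
              (C * (nrmZ d x * Real.sqrt α) ^
                (2 * (d : ℝ) * ((d : ℝ) - 2) / ((d : ℝ) ^ 2 + 2 * d - 4))) * green d x := by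
  have hd' : (3 : ℝ) ≤ d := by exact_mod_cast hd
  set D : ℝ := (d : ℝ) ^ 2 + 2 * d - 4 with hD
  have hD0 : 0 < D := by nlinarith
  -- `γ` is half the exponent, since `(‖x‖ √α)² = α ‖x‖²`.
  set γ : ℝ := (d : ℝ) * ((d : ℝ) - 2) / D with hγ
  have hγ0 : 0 < γ := div_pos (by nlinarith) hD0
  have hγ1 : γ ≤ 1 := by rw [hγ, div_le_one hD0, hD]; nlinarith
  have hs : 1 < (d : ℝ) / 2 - γ := by
    have h : γ < ((d : ℝ) - 2) / 2 := by
      rw [hγ, div_lt_div_iff₀ hD0 two_pos, hD]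
      nlinarith [mul_pos (show (0 : ℝ) < d - 2 by linarith)
        (show (0 : ℝ) < (d : ℝ) ^ 2 - 4 by nlinarith)]
    linarith
  obtain ⟨C, hC, h⟩ := green_sub_greenK_le hd hγ0 hγ1 hs
  refine ⟨C, 1 / 2, hC, by norm_num, fun α hα x hx0 _ => ?_⟩
  have hxne : x ≠ 0 := by
    rintro rfl
    simp [nrmZ] at hx0
  have hsq : 0 ≤ sqN d x := Finset.sum_nonneg fun i _ => sq_nonneg _
  have he : (nrmZ d x * Real.sqrt α) ^ (2 * (d : ℝ) * ((d : ℝ) - 2) / D) = (α * sqN d x) ^ γ := by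
    have e1 : 2 * (d : ℝ) * ((d : ℝ) - 2) / D = (2 : ℕ) * γ := by rw [hγ]; push_cast; ring
    rw [e1, Real.rpow_natCast_mul (mul_nonneg hx0.le (Real.sqrt_nonneg α)), mul_pow,
      Real.sq_sqrt hα.1.le, nrmZ, ← sqN, Real.sq_sqrt hsq, mul_comm]
  rw [he]
  exact h α ⟨hα.1, by linarith [hα.2]⟩ x hxne
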